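/- Let G be a simple graph on [n] whose edge ideal I = I(G) has almost maximal finite index, and let C be an induced cycle of length > 3 in the complement graph Ḡ. Then every vertex in [n] \ V(C) is adjacent in Ḡ to some vertex of C. -/

import Mathlib

open Finsupp

namespace EP

variable (K : Type) [Field K]

/-! ## Simplicial chains over a linearly ordered vertex set -/

variable {V : Type} [Fintype V] [DecidableEq V] [LinearOrder V]

/-- Boundary of a single (oriented) face, given as a finset. -/
noncomputable def bdFace (s : Finset V) : Finset V →₀ K :=
  ∑ v ∈ s, ((-1 : K) ^ ((s.filter (fun w => w < v)).card)) • Finsupp.single (s.erase v) 1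

/-- The simplicial boundary map on the free module on all finsets of vertices
(the augmented oriented chain complex, with the empty set playing the role of
the `(-1)`-dimensional face). -/
noncomputable def bdS : (Finset V →₀ K) →ₗ[K] (Finset V →₀ K) :=
  Finsupp.lsum K fun s => LinearMap.toSpanSingleton K (Finset V →₀ K) (bdFace K s)

/-- Chains supported on faces of a complex `Δ` having `k` vertices. -/
noncomputable def faceSpan (Δ : Set (Finset V)) (k : ℕ) : Submodule K (Finset V →₀ K) :=
  Submodule.span K {c | ∃ F ∈ Δ, F.card = k ∧ c = Finsupp.single F 1}

/-- Dimension of the `d`-th reduced simplicial homology of `Δ` over `K`. -/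
noncomputable def redHomRank (Δ : Set (Finset V)) (d : ℕ) : ℕ :=
  Module.finrank K ↥(faceSpan K Δ (d+1) ⊓ LinearMap.ker (bdS K)) -
    Module.finrank K
      ↥(Submodule.map (bdS K) (faceSpan K Δ (d+2)) ⊓
          (faceSpan K Δ (d+1) ⊓ LinearMap.ker (bdS K)))

/-- The flag complex of a graph: faces are the cliques. -/
def flagComplex (G : SimpleGraph V) : Set (Finset V) :=
  {F | ∀ i ∈ F, ∀ j ∈ F, i ≠ j → G.Adj i j}

/-- The flag complex of the induced subgraph of `G` on `W`. -/
def flagComplexOn (G : SimpleGraph V) (W : Finset V) : Set (Finset V) :=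
  {F | (F : Set V) ⊆ (W : Set V) ∧ ∀ i ∈ F, ∀ j ∈ F, i ≠ j → G.Adj i j}

/-- The induced subcomplex of `Δ` on a vertex subset `W`. -/
def restrictComplex (Δ : Set (Finset V)) (W : Finset V) : Set (Finset V) :=
  {F | F ∈ Δ ∧ F ⊆ W}

/-- The oriented `1`-chain `[a,b]` (so `[a,b] = -[b,a]`). -/
noncomputable def edgeChain (a b : V) : Finset V →₀ K :=
  if a < b then Finsupp.single {a, b} 1 else -Finsupp.single {a, b} 1

/-- The oriented `2`-chain `[x,y,z]`, antisymmetric under transpositions. -/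
noncomputable def triChain (x y z : V) : Finset V →₀ K :=
  if (x < y ∧ y < z) ∨ (y < z ∧ z < x) ∨ (z < x ∧ x < y)
  then Finsupp.single {x, y, z} 1
  else -Finsupp.single {x, y, z} 1

/-! ## Graded Betti numbers of monomial ideals via the Taylor complex -/

variable {n : ℕ}

/-- The multidegree lcm of the monomial generators indexed by `S`. -/
def mlcm {r : ℕ} (g : Fin r → (Fin n → ℕ)) (S : Finset (Fin r)) : Fin n → ℕ :=
  fun x => S.sup fun k => g k x

/-- The differential of the Taylor complex tensored with the residue field `K`. -/
noncomputable def bdT {r : ℕ} (g : Fin r → (Fin n → ℕ)) :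
    (Finset (Fin r) →₀ K) →ₗ[K] (Finset (Fin r) →₀ K) :=
  Finsupp.lsum K fun S => LinearMap.toSpanSingleton K (Finset (Fin r) →₀ K)
    (∑ k ∈ S, if mlcm g (S.erase k) = mlcm g S
      then ((-1 : K) ^ ((S.filter (fun j => j < k)).card)) • Finsupp.single (S.erase k) (1 : K)
      else 0)

/-- The degree-`j` strand of the Taylor complex in homological degree `p`. -/
noncomputable def strand {r : ℕ} (g : Fin r → (Fin n → ℕ)) (p j : ℕ) :
    Submodule K (Finset (Fin r) →₀ K) :=
  Submodule.span K
    {c | ∃ S : Finset (Fin r), S.card = p ∧ (∑ x, mlcm g S x) = j ∧ c = Finsupp.single S 1}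

/-- `dim_K Tor_p(S/I, K)_j`, computed from the Taylor complex on the monomial
generators `g` of `I`. -/
noncomputable def torRank {r : ℕ} (g : Fin r → (Fin n → ℕ)) (p j : ℕ) : ℕ :=
  Module.finrank K ↥(strand K g p j ⊓ LinearMap.ker (bdT K g)) -
    Module.finrank K
      ↥(Submodule.map (bdT K g) (strand K g (p+1) j) ⊓
          (strand K g p j ⊓ LinearMap.ker (bdT K g)))

/-- The graded Betti number `β_{i,j}(I)` of the monomial ideal `I` generated by
the monomials with exponent vectors `g`, i.e. `dim_K Tor_i(I, K)_j = dim_K Tor_{i+1}(S/I, K)_j`. -/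
noncomputable def betti {r : ℕ} (g : Fin r → (Fin n → ℕ)) (i j : ℕ) : ℕ :=
  torRank K g (i+1) j

/-- The monomial with exponent vector `a`. -/
noncomputable def mono (a : Fin n → ℕ) : MvPolynomial (Fin n) K :=
  MvPolynomial.monomial (Finsupp.equivFunOnFinite.symm a) 1

/-- `g` is a list of exponent vectors of monomials generating the ideal `I`. -/
def IsGenSet {r : ℕ} (g : Fin r → (Fin n → ℕ)) (I : Ideal (MvPolynomial (Fin n) K)) : Prop :=
  Ideal.span (Set.range fun k => mono K (g k)) = I

/-- The ideal (generated by the monomials with exponent vectors `g`) has a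
`d`-linear resolution. -/
def HasLinRes {r : ℕ} (g : Fin r → (Fin n → ℕ)) (d : ℕ) : Prop :=
  ∀ i j, betti K g i j ≠ 0 → j = i + d

/-- Castelnuovo–Mumford regularity of a monomial ideal, from its Betti numbers. -/
noncomputable def regT {r : ℕ} (g : Fin r → (Fin n → ℕ)) : ℕ :=
  sSup {d | ∃ i j, betti K g i j ≠ 0 ∧ j = i + d}

/-! ## Edge ideals -/

/-- The edge ideal of a simple graph. -/
noncomputable def edgeIdeal (G : SimpleGraph (Fin n)) : Ideal (MvPolynomial (Fin n) K) :=
  Ideal.span {m | ∃ i j : Fin n, G.Adj i j ∧ m = MvPolynomial.X i * MvPolynomial.X j}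

/-- The edge set of `G` as a finset. -/
noncomputable def edgeFins (G : SimpleGraph (Fin n)) : Finset (Sym2 (Fin n)) :=
  letI : Fintype ↥G.edgeSet := Fintype.ofFinite _
  G.edgeFinset

/-- The canonical monomial (exponent vector) generators of the edge ideal of `G`. -/
noncomputable def edgeGens (G : SimpleGraph (Fin n)) : Fin (edgeFins G).card → (Fin n → ℕ) :=
  fun k x => if x ∈ ((edgeFins G).equivFin.symm k : Sym2 (Fin n)) then 1 else 0

/-- The graded Betti numbers `β_{i,j}(I(G))` of the edge ideal of `G` over `K`. -/
noncomputable def gBetti (G : SimpleGraph (Fin n)) (i j : ℕ) : ℕ :=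
  betti K (edgeGens G) i j

/-- The projective dimension `pd(I(G))` of the edge ideal of `G` over `K`. -/
noncomputable def gPd (G : SimpleGraph (Fin n)) : ℕ :=
  sSup {i | ∃ j, gBetti K G i j ≠ 0}

/-- The Green–Lazarsfeld index of the edge ideal of `G` over `K`
(`⊤` iff the ideal has a linear resolution). -/
noncomputable def gIndex (G : SimpleGraph (Fin n)) : ℕ∞ :=
  sInf {N : ℕ∞ | ∃ i j : ℕ, N = (i : ℕ∞) ∧ i + 2 < j ∧ gBetti K G i j ≠ 0}

/-- The regularity of the edge ideal of `G` over `K`. -/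
noncomputable def gReg (G : SimpleGraph (Fin n)) : ℕ :=
  sSup {d | ∃ i j, gBetti K G i j ≠ 0 ∧ j = i + d}

/-- The edge ideal of `G` has a (2-)linear resolution over `K`. -/
def gLinRes (G : SimpleGraph (Fin n)) : Prop :=
  ∀ i j, gBetti K G i j ≠ 0 → j = i + 2

/-- The edge ideal of `G` has almost maximal finite index over `K`:
`index(I(G)) = pd(I(G)) - 1` (with the index finite). -/
def AMFI (G : SimpleGraph (Fin n)) : Prop :=
  gIndex K G + 1 = (gPd K G : ℕ∞)

/-! ## Graph-theoretic notions -/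

/-- `H` contains an induced (chordless) cycle of length `l`. -/
def HasInducedCycle {W : Type} (H : SimpleGraph W) (l : ℕ) : Prop :=
  ∃ f : ZMod l → W, Function.Injective f ∧
    ∀ i j : ZMod l, H.Adj (f i) (f j) ↔ (j = i + 1 ∨ i = j + 1)

/-- `H` is chordal: it has no induced cycle of length greater than `3`. -/
def Chordal {W : Type} (H : SimpleGraph W) : Prop :=
  ∀ l : ℕ, 3 < l → ¬ HasInducedCycle H l

end EP

/-!
In the Taylor complex of `I(G)`, a set `S` of edges in which every edge has a vertex lying on no
other is a cycle. It represents a nonzero class in homological degree `|S| - 1` as soon as some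
functional with `Ψ(S) ≠ 0` vanishes on the simplicial boundary of every set of edges covering the
same vertices as `S`, and on every set covering strictly fewer.

Let `C` be an induced cycle of length `l` in the complement, and suppose that `v` is `G`-adjacent
to all of `C`. The star of `v` then gives `β_{l-1,l+1} ≠ 0`, so `pd ≥ l - 1`. The edges of `G`
within `C` are the chords of an `l`-cycle; they give `β_{l-3,l} ≠ 0`, so `index ≤ l - 3`. Hence
`index + 2 ≤ pd`.

For the star, `Ψ` is the pullback of the signed indicator of the top face of a simplex whose
vertices are the labels of the edges. For the cycle, a single such pullback `Λ_t` is not enough: it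
does not vanish on sets of edges that miss the last vertex `t + 1`. But such a set `T` consists of
diagonals of the path `0, …, t`, where `Λ_t(T)` is `Λ_{t-1}` of the boundary of `T`, which suggests
the recursion `Ψ_t = Λ_t - Ψ_{t-1} ∘ ∂`.
-/

namespace EP

section WeightedBoundary

variable {R V : Type*} [CommRing R] [LinearOrder V]

/-- The boundary map of the full simplex on `V` in which deleting the vertex `v` from a face is
weighted by `d v`; in exterior-algebra terms, the contraction by the functional `d`. It is bundled
as a linear function of the weight `d`. -/
noncomputable def weightedBoundary : (V → R) →ₗ[R] (Finset V →₀ R) →ₗ[R] (Finset V →₀ R) where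
  toFun d := Finsupp.lsum R fun s => LinearMap.toSpanSingleton R (Finset V →₀ R)
    (∑ v ∈ s, ((-1) ^ (s.filter (· < v)).card * d v) • single (s.erase v) 1)
  map_add' d d' := by ext1 s; ext1; simp [mul_add, add_smul, Finset.sum_add_distrib]
  map_smul' c d := by ext1 s; ext1; simp [mul_left_comm _ c, mul_smul, Finset.smul_sum]

theorem weightedBoundary_single (d : V → R) (s : Finset V) :
    weightedBoundary d (single s 1) =
      ∑ v ∈ s, ((-1) ^ (s.filter (· < v)).card * d v) • single (s.erase v) 1 := by
  simp [weightedBoundary]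

theorem weightedBoundary_single_congr {d d' : V → R} {s : Finset V} (h : ∀ v ∈ s, d v = d' v) :
    weightedBoundary d (single s 1) = weightedBoundary d' (single s 1) := by
  simp only [weightedBoundary_single]
  exact Finset.sum_congr rfl fun v hv => by rw [h v hv]

theorem weightedBoundary_single_eq_zero {d : V → R} {s : Finset V} (h : ∀ v ∈ s, d v = 0) :
    weightedBoundary d (single s 1) = 0 := by
  rw [weightedBoundary_single_congr (d' := 0) h, map_zero, LinearMap.zero_apply]

theorem neg_one_pow_card_filter_erase_swap {s : Finset V} {v w : V} (hv : v ∈ s) (hw : w ∈ s)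
    (hvw : v ≠ w) :
    (-1 : R) ^ (s.filter (· < v)).card * (-1) ^ ((s.erase v).filter (· < w)).card =
      -((-1) ^ (s.filter (· < w)).card * (-1) ^ ((s.erase w).filter (· < v)).card) := by
  wlog h : v < w generalizing v w
  · rw [this hw hv hvw.symm (lt_of_le_of_ne (not_lt.1 h) hvw.symm), neg_neg]
  have hcard : (s.filter (· < w)).card = ((s.erase v).filter (· < w)).card + 1 := by
    rw [Finset.filter_erase, Finset.card_erase_add_one (by simp [hv, h])]
  have herase : (s.erase w).filter (· < v) = s.filter (· < v) := by
    rw [Finset.filter_erase, Finset.erase_eq_of_notMem (by simp [h.le])]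
  rw [hcard, herase]
  ring

theorem weightedBoundary_comp_self (d : V → R) : weightedBoundary d ∘ₗ weightedBoundary d = 0 := by
  ext1 s
  ext1
  simp only [LinearMap.comp_apply, LinearMap.zero_apply, lsingle_apply, weightedBoundary_single,
    map_sum, map_smul, Finset.smul_sum, smul_smul]
  rw [Finset.sum_sigma']
  refine Finset.sum_involution (fun p _ => ⟨p.2, p.1⟩) ?_ ?_ ?_ ?_
  · rintro ⟨v, w⟩ h
    simp only [Finset.mem_sigma, Finset.mem_erase] at h
    have hsign := neg_one_pow_card_filter_erase_swap (R := R) h.1 h.2.2 (Ne.symm h.2.1)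
    rw [Finset.erase_right_comm, ← add_smul]
    convert zero_smul R _ using 2
    linear_combination d v * d w * hsign
  · rintro ⟨v, w⟩ h - heq
    simp_all
  · rintro ⟨v, w⟩ h
    simp_all [eq_comm]
  · simp

theorem weightedBoundary_weightedBoundary (d : V → R) (x : Finset V →₀ R) :
    weightedBoundary d (weightedBoundary d x) = 0 :=
  LinearMap.congr_fun (weightedBoundary_comp_self d) x

theorem weightedBoundary_anticomm (d d' : V → R) (x : Finset V →₀ R) :
    weightedBoundary d (weightedBoundary d' x) = -weightedBoundary d' (weightedBoundary d x) := by
  have h := weightedBoundary_weightedBoundary (d + d') x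
  simp only [map_add, LinearMap.add_apply, weightedBoundary_weightedBoundary, zero_add,
    add_zero] at h
  exact eq_neg_of_add_eq_zero_right h

end WeightedBoundary

section LabelForm

variable {R V ι : Type*} [CommRing R] [LinearOrder V] [DecidableEq ι]

/-- The cochain on the simplex on `V` obtained by pulling back, along a labelling `ℓ` of the
vertices, the signed indicator of the face `L` of the simplex on `ι`. -/
noncomputable def labelForm (ℓ : V → ι) : List ι → (Finset V →₀ R) →ₗ[R] R
  | [] => lapply ∅
  | b :: L => labelForm ℓ L ∘ₗ weightedBoundary (Pi.single b 1 ∘ ℓ)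

variable {ℓ : V → ι} {L : List ι}

theorem labelForm_cons_apply (b : ι) (x : Finset V →₀ R) :
    labelForm ℓ (b :: L) x = labelForm ℓ L (weightedBoundary (Pi.single b 1 ∘ ℓ) x) :=
  rfl

theorem labelForm_single_eq_zero {b : ι} (hb : b ∈ L) {s : Finset V} (hs : ∀ v ∈ s, ℓ v ≠ b) :
    labelForm ℓ L (single s (1 : R)) = 0 := by
  induction L generalizing s with
  | nil => simp at hb
  | cons a L ih =>
    rw [labelForm_cons_apply]
    rcases List.mem_cons.1 hb with rfl | hb
    · rw [weightedBoundary_single_eq_zero fun v hv => by simp [hs v hv], map_zero]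
    · simp only [weightedBoundary_single, map_sum, map_smul]
      exact Finset.sum_eq_zero fun v _ => by
        rw [ih hb fun w hw => hs w (Finset.mem_of_mem_erase hw), smul_zero]

theorem isUnit_labelForm_single (hL : L.Nodup) {s : Finset V} (hs : Set.InjOn ℓ s)
    (himage : s.image ℓ = L.toFinset) : IsUnit (labelForm ℓ L (single s (1 : R))) := by
  induction L generalizing s with
  | nil => simp_all [labelForm]
  | cons b L ih =>
    obtain ⟨hb, hL'⟩ := List.nodup_cons.1 hL
    obtain ⟨v, hv, rfl⟩ := Finset.mem_image.1 (himage ▸ List.mem_toFinset.2 List.mem_cons_self)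
    have herase : (s.erase v).image ℓ = L.toFinset := by
      rw [← Finset.sdiff_singleton_eq_erase, Finset.image_sdiff_of_injOn hs (by simpa using hv),
        himage, Finset.image_singleton, Finset.sdiff_singleton_eq_erase, List.toFinset_cons,
        Finset.erase_insert (by simpa using hb)]
    have hboundary : weightedBoundary (Pi.single (ℓ v) 1 ∘ ℓ) (single s (1 : R)) =
        (-1 : R) ^ (s.filter (· < v)).card • single (s.erase v) 1 := by
      rw [weightedBoundary_single, Finset.sum_eq_single_of_mem v hv]
      · simp
      · intro w hw hwv
        simp [mt (hs hw hv) hwv]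
    rw [labelForm_cons_apply, hboundary, map_smul, smul_eq_mul]
    exact (isUnit_one.neg.pow _).mul (ih hL' (hs.mono (s.erase_subset v)) herase)

theorem isUnit_labelForm_comp_single {E : Type*} [DecidableEq E] {ends : V → E} {ℓ : E → ι}
    {Q : ι → E} (hL : L.Nodup) {s : Finset V} (hs : Set.InjOn ends s)
    (himage : s.image ends = L.toFinset.image Q) (hQ : ∀ b ∈ L, ℓ (Q b) = b) :
    IsUnit (labelForm (ℓ ∘ ends) L (single s (1 : R))) := by
  refine isUnit_labelForm_single hL ?_ ?_
  · have hleft : Set.LeftInvOn Q ℓ (s.image ends) := by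
      intro e he
      rw [himage, Finset.mem_coe, Finset.mem_image] at he
      obtain ⟨b, hb, rfl⟩ := he
      rw [hQ b (List.mem_toFinset.1 hb)]
    exact hleft.injOn.comp hs fun v hv => Finset.mem_image_of_mem ends hv
  · rw [← Finset.image_image, himage, Finset.image_image]
    exact (Finset.image_congr fun b hb => hQ b (List.mem_toFinset.1 hb)).trans Finset.image_id

theorem labelForm_weightedBoundary_eq_zero {w : ι → R} (hw : ∀ b ∉ L, w b = 0)
    (x : Finset V →₀ R) : labelForm ℓ L (weightedBoundary (w ∘ ℓ) x) = 0 := by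
  induction L generalizing w x with
  | nil => simp [show w ∘ ℓ = 0 from funext fun v => hw (ℓ v) List.not_mem_nil]
  | cons b L ih =>
    have hsplit : w ∘ ℓ = w b • (Pi.single b 1 ∘ ℓ) + Function.update w b 0 ∘ ℓ := by
      ext v
      by_cases h : ℓ v = b <;> simp [h]
    have hrest : ∀ c ∉ L, Function.update w b 0 c = 0 := by
      intro c hc
      by_cases h : c = b <;> simp [h, hw, hc]
    rw [labelForm_cons_apply, hsplit, map_add, map_smul, LinearMap.add_apply,
      LinearMap.smul_apply, map_add, map_smul, weightedBoundary_weightedBoundary, smul_zero,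
      zero_add, weightedBoundary_anticomm, map_neg, ih hrest, neg_zero]

theorem labelForm_boundary_single_eq_zero {s : Finset V} (hs : ∀ v ∈ s, ℓ v ∈ L) :
    labelForm ℓ L (weightedBoundary 1 (single s (1 : R))) = 0 := by
  let w : ι → R := fun b => if b ∈ L then 1 else 0
  rw [weightedBoundary_single_congr (d := 1) (d' := w ∘ ℓ) fun v hv => (if_pos (hs v hv)).symm]
  exact labelForm_weightedBoundary_eq_zero (fun b hb => by simp [w, hb]) _

theorem labelForm_boundary_single {b : ι} {s : Finset V} (hs : ∀ v ∈ s, ℓ v ∈ b :: L) :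
    labelForm ℓ L (weightedBoundary 1 (single s (1 : R))) =
      labelForm ℓ (b :: L) (single s 1) := by
  let w : ι → R := fun c => if c ∈ b :: L then 1 else 0
  have hzero := labelForm_weightedBoundary_eq_zero (ℓ := ℓ) (L := L) (w := w - Pi.single b 1)
    (fun c hc => by by_cases h : c = b <;> simp [w, h, hc]) (single s 1)
  rw [Pi.sub_comp, map_sub, LinearMap.sub_apply, map_sub, sub_eq_zero] at hzero
  rw [weightedBoundary_single_congr (d := 1) (d' := w ∘ ℓ) fun v hv => (if_pos (hs v hv)).symm,
    hzero, labelForm_cons_apply]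

end LabelForm

section CycleForm

/-- The diagonals `{i, j}` with `i + 1 < j ≤ s` of the path `0, 1, …, s`. -/
def diagonals (s : ℕ) : Set (Sym2 ℕ) :=
  {e | ∃ i j, i + 1 < j ∧ j ≤ s ∧ e = s(i, j)}

/-- The chords of the cycle `0, 1, …, t + 1`. -/
def cycleChords (t : ℕ) : Set (Sym2 ℕ) :=
  diagonals (t + 1) \ {s(0, t + 1)}

/-- The label under which a diagonal enters `cycleForm`: its least nonzero endpoint. -/
def diagonalLabel (e : Sym2 ℕ) : ℕ :=
  if e.inf = 0 then e.sup else e.inf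

theorem mem_diagonals_of_succ {s : ℕ} {e : Sym2 ℕ} (he : e ∈ diagonals (s + 1))
    (hs : s + 1 ∉ e) : e ∈ diagonals s := by
  obtain ⟨i, j, hij, hj, rfl⟩ := he
  refine ⟨i, j, hij, ?_, rfl⟩
  simp only [Sym2.mem_iff, not_or] at hs
  lia

theorem diagonalLabel_mem {s : ℕ} {e : Sym2 ℕ} (he : e ∈ diagonals s) : diagonalLabel e ∈ e := by
  obtain ⟨i, j, hij, -, rfl⟩ := he
  simp only [diagonalLabel, Sym2.inf_mk, Sym2.sup_mk, Sym2.mem_iff]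
  grind

theorem diagonalLabel_pos {s : ℕ} {e : Sym2 ℕ} (he : e ∈ diagonals s) : 1 ≤ diagonalLabel e := by
  obtain ⟨i, j, hij, -, rfl⟩ := he
  simp only [diagonalLabel, Sym2.inf_mk, Sym2.sup_mk]
  grind

theorem diagonalLabel_le {s : ℕ} {e : Sym2 ℕ} (he : e ∈ diagonals s) : diagonalLabel e ≤ s := by
  obtain ⟨i, j, hij, hj, rfl⟩ := he
  simp only [diagonalLabel, Sym2.inf_mk, Sym2.sup_mk]
  grind

theorem diagonalLabel_lt_of_zero_notMem {s : ℕ} {e : Sym2 ℕ} (he : e ∈ diagonals (s + 1))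
    (h0 : 0 ∉ e) : diagonalLabel e < s := by
  obtain ⟨i, j, hij, hj, rfl⟩ := he
  simp only [Sym2.mem_iff] at h0
  simp only [diagonalLabel, Sym2.inf_mk, Sym2.sup_mk]
  grind

theorem diagonalLabel_lt_of_ne {s : ℕ} {e : Sym2 ℕ} (he : e ∈ diagonals s) (h : e ≠ s(0, s)) :
    diagonalLabel e < s := by
  obtain ⟨i, j, hij, hj, rfl⟩ := he
  simp only [diagonalLabel, Sym2.inf_mk, Sym2.sup_mk]
  grind

variable {R V : Type*} [CommRing R] (ends : V → Sym2 ℕ)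

open Classical in
/-- The projection of a chain onto the faces all of whose vertices have a diagonal of
`0, 1, …, s` as their ends. -/
noncomputable def diagonalPart (s : ℕ) : (Finset V →₀ R) →ₗ[R] (Finset V →₀ R) :=
  (supported R R _).subtype ∘ₗ restrictDom R R {T : Finset V | ∀ e ∈ T, ends e ∈ diagonals s}

variable {ends} in
theorem diagonalPart_single {s : ℕ} {T : Finset V} (hT : ∀ e ∈ T, ends e ∈ diagonals s) :
    diagonalPart ends s (single T (1 : R)) = single T 1 := by
  classical exact filter_single_of_pos _ hT

variable {ends} in
theorem diagonalPart_single_eq_zero {s : ℕ} {T : Finset V}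
    (hT : ¬ ∀ e ∈ T, ends e ∈ diagonals s) : diagonalPart ends s (single T (1 : R)) = 0 := by
  classical exact filter_single_of_neg _ hT

variable [LinearOrder V]

/-- The cochain detecting the top Betti number of the edge ideal on the chords of the cycle
`0, 1, …, t + 1`, where the vertex `e` stands for the edge `ends e`. -/
noncomputable def cycleForm : ℕ → (Finset V →₀ R) →ₗ[R] R
  | 0 => 0
  | t + 1 => labelForm (diagonalLabel ∘ ends) (List.range' 1 (t + 1)).reverse -
      cycleForm t ∘ₗ diagonalPart ends (t + 1) ∘ₗ weightedBoundary 1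

variable {ends}

theorem diagonalPart_boundary_single {s : ℕ} {T : Finset V} (hT : ∀ e ∈ T, ends e ∈ diagonals s) :
    diagonalPart ends s (weightedBoundary 1 (single T (1 : R))) =
      weightedBoundary 1 (single T 1) := by
  simp only [weightedBoundary_single, map_sum, map_smul]
  exact Finset.sum_congr rfl fun v _ => by
    rw [diagonalPart_single fun e he => hT e (Finset.mem_of_mem_erase he)]

theorem cycleForm_succ_apply (t : ℕ) (x : Finset V →₀ R) :
    cycleForm ends (t + 1) x =
      labelForm (diagonalLabel ∘ ends) (List.range' 1 (t + 1)).reverse x -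
        cycleForm ends t (diagonalPart ends (t + 1) (weightedBoundary 1 x)) :=
  rfl

theorem cycleForm_succ_single_eq_labelForm {t : ℕ} {T : Finset V}
    (h : ∀ U ⊆ T, (∀ e ∈ U, ends e ∈ diagonals (t + 1)) → cycleForm ends t (single U (1 : R)) = 0) :
    cycleForm ends (t + 1) (single T (1 : R)) =
      labelForm (diagonalLabel ∘ ends) (List.range' 1 (t + 1)).reverse (single T 1) := by
  rw [cycleForm_succ_apply, sub_eq_self]
  simp only [weightedBoundary_single, map_sum, map_smul]
  refine Finset.sum_eq_zero fun v _ => ?_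
  by_cases hU : ∀ e ∈ T.erase v, ends e ∈ diagonals (t + 1)
  · rw [diagonalPart_single hU, h _ (T.erase_subset v) hU, smul_zero]
  · rw [diagonalPart_single_eq_zero hU, map_zero, smul_zero]

theorem cycleForm_boundary_single {t : ℕ} {T : Finset V}
    (hT : ∀ e ∈ T, ends e ∈ diagonals (t + 1)) :
    cycleForm ends t (weightedBoundary 1 (single T (1 : R))) =
      labelForm (diagonalLabel ∘ ends) (List.range' 1 t).reverse
        (weightedBoundary 1 (single T 1)) := by
  cases t with
  | zero =>
    have hempty : T = ∅ := Finset.eq_empty_of_forall_notMem fun e he => by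
      obtain ⟨i, j, hij, hj, -⟩ := hT e he
      lia
    simp [hempty, weightedBoundary_single]
  | succ t =>
    rw [cycleForm_succ_apply, weightedBoundary_weightedBoundary, map_zero, map_zero, sub_zero]

theorem cycleForm_boundary_single_eq_zero {t : ℕ} {T : Finset V}
    (hT : ∀ e ∈ T, ends e ∈ cycleChords t) :
    cycleForm ends t (weightedBoundary 1 (single T (1 : R))) = 0 := by
  rw [cycleForm_boundary_single fun e he => (hT e he).1]
  refine labelForm_boundary_single_eq_zero fun e he => ?_
  have hpos := diagonalLabel_pos (hT e he).1
  have hlt := diagonalLabel_lt_of_ne (hT e he).1 (hT e he).2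
  simp only [Function.comp_apply, List.mem_reverse, List.mem_range'_1]
  lia

theorem cycleForm_single_eq_zero {t c : ℕ} (hc : c ≤ t + 1) {T : Finset V}
    (hT : ∀ e ∈ T, ends e ∈ diagonals (t + 1) ∧ c ∉ ends e) :
    cycleForm ends t (single T (1 : R)) = 0 := by
  induction t generalizing c T with
  | zero => rfl
  | succ t ih =>
    rcases hc.eq_or_lt with rfl | hc
    · -- Without the last vertex, the correction term is the label form of the boundary.
      have hT' : ∀ e ∈ T, ends e ∈ diagonals (t + 1) := fun e he =>
        mem_diagonals_of_succ (hT e he).1 (hT e he).2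
      have hrange : (List.range' 1 (t + 1)).reverse = (t + 1) :: (List.range' 1 t).reverse := by
        simp [List.range'_concat, add_comm]
      rw [cycleForm_succ_apply, diagonalPart_boundary_single hT', cycleForm_boundary_single hT',
        hrange, labelForm_boundary_single (b := t + 1), sub_self]
      intro e he
      have hpos := diagonalLabel_pos (hT' e he)
      have hle := diagonalLabel_le (hT' e he)
      simp only [Function.comp_apply, List.mem_cons, List.mem_reverse, List.mem_range'_1]
      lia
    · rw [cycleForm_succ_single_eq_labelForm fun U hU hdiag =>
        ih (Nat.lt_succ_iff.1 hc) fun e he => ⟨hdiag e he, (hT e (hU he)).2⟩]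
      rcases Nat.eq_zero_or_pos c with rfl | hpos
      · refine labelForm_single_eq_zero (b := t + 1) (by simp) fun e he => ?_
        exact (diagonalLabel_lt_of_zero_notMem (hT e he).1 (hT e he).2).ne
      · refine labelForm_single_eq_zero (b := c) (by grind) fun e he h => (hT e he).2 ?_
        exact h ▸ diagonalLabel_mem (hT e he).1

/-- The endpoint other than `j` of `coverEdge t j`. -/
def coverEnd (t j : ℕ) : ℕ :=
  if j = t then 0 else t + 1

/-- The `j`-th edge, `1 ≤ j ≤ t`, of the minimal edge cover of the cycle `0, 1, …, t + 1` by
chords on which `cycleForm t` does not vanish: a star at `t + 1`, and the chord `{0, t}`. -/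
def coverEdge (t j : ℕ) : Sym2 ℕ :=
  s(j, coverEnd t j)

theorem diagonalLabel_coverEdge {t j : ℕ} (hj : 1 ≤ j) (hjt : j ≤ t) :
    diagonalLabel (coverEdge t j) = j := by
  simp only [diagonalLabel, coverEdge, coverEnd, Sym2.inf_mk, Sym2.sup_mk]
  grind

theorem one_notMem_coverEdge {t j : ℕ} (ht : 2 ≤ t) (h : coverEdge t j ∈ diagonals t) :
    1 ∉ coverEdge t j := by
  obtain ⟨a, b, hab, hb, h⟩ := h
  simp only [coverEdge, coverEnd, Sym2.eq_iff, Sym2.mem_iff] at h ⊢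
  grind

theorem isUnit_cycleForm_single {t : ℕ} (ht : 2 ≤ t) {T : Finset V} (hends : Set.InjOn ends T)
    (hT : T.image ends = (Finset.Icc 1 t).image (coverEdge t)) :
    IsUnit (cycleForm ends t (single T (1 : R))) := by
  obtain ⟨s, rfl⟩ := Nat.exists_eq_succ_of_ne_zero (show t ≠ 0 by lia)
  rw [cycleForm_succ_single_eq_labelForm]
  · have hrange : (List.range' 1 (s + 1)).reverse.toFinset = Finset.Icc 1 (s + 1) := by
      ext j
      simp only [List.mem_toFinset, List.mem_reverse, List.mem_range'_1, Finset.mem_Icc]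
      lia
    refine isUnit_labelForm_comp_single (List.nodup_reverse.2 List.nodup_range') hends
      (hrange ▸ hT) fun j hj => ?_
    rw [← List.mem_toFinset, hrange, Finset.mem_Icc] at hj
    exact diagonalLabel_coverEdge hj.1 hj.2
  · refine fun U hU hdiag => cycleForm_single_eq_zero (c := 1) (by lia) fun e he => ?_
    refine ⟨hdiag e he, ?_⟩
    obtain ⟨j, -, hj⟩ := Finset.mem_image.1 (hT ▸ Finset.mem_image_of_mem ends (hU he))
    rw [← hj]
    exact one_notMem_coverEdge ht (hj ▸ hdiag e he)

end CycleForm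

section Taylor

variable {K : Type} [Field K] {n r : ℕ} (g : Fin r → Fin n → ℕ)

theorem mlcm_mono {S T : Finset (Fin r)} (h : S ⊆ T) : mlcm g S ≤ mlcm g T :=
  fun _ => Finset.sup_mono h

theorem bdT_single (S : Finset (Fin r)) :
    bdT K g (single S 1) = ∑ k ∈ S, if mlcm g (S.erase k) = mlcm g S
      then ((-1 : K) ^ (S.filter (· < k)).card) • single (S.erase k) (1 : K) else 0 := by
  simp [bdT]

/-- The restriction of a functional `Ψ` on chains to the chains of multidegree `w`. -/
noncomputable def multidegreePart (Ψ : (Finset (Fin r) →₀ K) →ₗ[K] K) (w : Fin n → ℕ) :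
    (Finset (Fin r) →₀ K) →ₗ[K] K :=
  linearCombination K fun S => if mlcm g S = w then Ψ (single S 1) else 0

variable {g}

theorem multidegreePart_single (Ψ : (Finset (Fin r) →₀ K) →ₗ[K] K) (w : Fin n → ℕ)
    (S : Finset (Fin r)) :
    multidegreePart g Ψ w (single S 1) = if mlcm g S = w then Ψ (single S 1) else 0 := by
  simp [multidegreePart]

theorem multidegreePart_comp_bdT_eq_zero {Ψ : (Finset (Fin r) →₀ K) →ₗ[K] K} {w : Fin n → ℕ}
    (hclosed : ∀ U, mlcm g U = w → Ψ (weightedBoundary 1 (single U 1)) = 0)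
    (hlt : ∀ T, mlcm g T < w → Ψ (single T 1) = 0) :
    multidegreePart g Ψ w ∘ₗ bdT K g = 0 := by
  ext U
  simp only [LinearMap.comp_apply, lsingle_apply, LinearMap.zero_apply, bdT_single, map_sum]
  by_cases hU : mlcm g U = w
  · rw [← hclosed U hU, weightedBoundary_single, map_sum]
    refine Finset.sum_congr rfl fun k _ => ?_
    split_ifs with hk
    · rw [map_smul, map_smul, multidegreePart_single, if_pos (hk.trans hU), Pi.one_apply, mul_one]
    · have hTlt := ((mlcm_mono g (U.erase_subset k)).lt_of_ne hk).trans_eq hU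
      rw [map_zero, map_smul, hlt _ hTlt, smul_zero]
  · refine Finset.sum_eq_zero fun k _ => ?_
    split_ifs with hk
    · rw [map_smul, multidegreePart_single, if_neg (hk ▸ hU), smul_zero]
    · exact map_zero _

theorem torRank_ne_zero_of_cocycle (Ψ : (Finset (Fin r) →₀ K) →ₗ[K] K) {S : Finset (Fin r)}
    (hclosed : ∀ U, mlcm g U = mlcm g S → Ψ (weightedBoundary 1 (single U 1)) = 0)
    (hlt : ∀ T, mlcm g T < mlcm g S → Ψ (single T 1) = 0)
    (hmin : ∀ k ∈ S, mlcm g (S.erase k) ≠ mlcm g S) (hS : Ψ (single S 1) ≠ 0) :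
    torRank K g S.card (∑ x, mlcm g S x) ≠ 0 := by
  have hcycle : single S 1 ∈ strand K g S.card (∑ x, mlcm g S x) ⊓ LinearMap.ker (bdT K g) := by
    refine ⟨Submodule.subset_span ⟨S, rfl, rfl, rfl⟩, ?_⟩
    rw [SetLike.mem_coe, LinearMap.mem_ker, bdT_single]
    exact Finset.sum_eq_zero fun k hk => if_neg (hmin k hk)
  have hnotBoundary : single S 1 ∉
      Submodule.map (bdT K g) (strand K g (S.card + 1) (∑ x, mlcm g S x)) := by
    rintro ⟨u, -, hu⟩
    have hzero := LinearMap.congr_fun (multidegreePart_comp_bdT_eq_zero hclosed hlt) u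
    rw [LinearMap.comp_apply, hu, multidegreePart_single, if_pos rfl] at hzero
    exact hS hzero
  have hfinrank := Submodule.finrank_lt_finrank_of_lt
    (lt_of_le_not_ge inf_le_right fun h => hnotBoundary (h hcycle).1)
  exact (Nat.sub_pos_of_lt hfinrank).ne'

theorem torRank_eq_zero_of_lt {p : ℕ} (hp : r < p) (j : ℕ) : torRank K g p j = 0 := by
  have hstrand : strand K g p j = ⊥ := by
    rw [strand, Submodule.span_eq_bot]
    rintro c ⟨S, hS, -⟩
    have hcard := S.card_le_univ
    rw [Fintype.card_fin] at hcard
    lia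
  rw [torRank, hstrand, bot_inf_eq, finrank_bot, zero_tsub]

end Taylor

section EdgeIdeal

variable {K : Type} [Field K] {n : ℕ} (G : SimpleGraph (Fin n))

/-- The edge of `G` whose monomial is the `k`-th generator of the edge ideal. -/
noncomputable def edge (k : Fin (edgeFins G).card) : Sym2 (Fin n) :=
  (edgeFins G).equivFin.symm k

/-- The vertices of `G` lying on an edge indexed by `S`. -/
noncomputable def coveredVertices (S : Finset (Fin (edgeFins G).card)) : Finset (Fin n) :=
  Finset.univ.filter fun x => ∃ k ∈ S, x ∈ edge G k

theorem edge_injective : Function.Injective (edge G) :=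
  Subtype.val_injective.comp (edgeFins G).equivFin.symm.injective

theorem mem_edgeFins {e : Sym2 (Fin n)} : e ∈ edgeFins G ↔ e ∈ G.edgeSet := by
  simp [edgeFins]

theorem edge_mem_edgeSet (k : Fin (edgeFins G).card) : edge G k ∈ G.edgeSet :=
  (mem_edgeFins G).1 ((edgeFins G).equivFin.symm k).2

variable {G}

theorem exists_image_edge_eq {Q : Finset (Sym2 (Fin n))} (hQ : ∀ e ∈ Q, e ∈ G.edgeSet) :
    ∃ S : Finset (Fin (edgeFins G).card), S.image (edge G) = Q := by
  have hsub : Q ⊆ Finset.univ.image (edge G) := fun e he => Finset.mem_image.2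
    ⟨(edgeFins G).equivFin ⟨e, (mem_edgeFins G).2 (hQ e he)⟩, Finset.mem_univ _, by simp [edge]⟩
  obtain ⟨S, -, hS⟩ := Finset.subset_image_iff.1 hsub
  exact ⟨S, hS⟩

theorem mem_coveredVertices {S : Finset (Fin (edgeFins G).card)} {x : Fin n} :
    x ∈ coveredVertices G S ↔ ∃ k ∈ S, x ∈ edge G k := by
  simp [coveredVertices]

theorem mlcm_edgeGens (S : Finset (Fin (edgeFins G).card)) (x : Fin n) :
    mlcm (edgeGens G) S x = if x ∈ coveredVertices G S then 1 else 0 := by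
  split_ifs with h
  · obtain ⟨k, hk, hx⟩ := mem_coveredVertices.1 h
    refine le_antisymm (Finset.sup_le fun k _ => ?_) ?_
    · rw [edgeGens]
      split_ifs <;> simp
    · exact (if_pos hx).ge.trans (Finset.le_sup (f := fun k => edgeGens G k x) hk)
  · exact (Finset.sup_eq_bot_iff _ _).2 fun k hk =>
      if_neg fun hx => h (mem_coveredVertices.2 ⟨k, hk, hx⟩)

theorem mlcm_edgeGens_le_iff {S T : Finset (Fin (edgeFins G).card)} :
    mlcm (edgeGens G) S ≤ mlcm (edgeGens G) T ↔ coveredVertices G S ⊆ coveredVertices G T := by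
  simp only [Pi.le_def, mlcm_edgeGens, Finset.subset_iff]
  refine forall_congr' fun x => ?_
  split_ifs <;> simp_all

theorem gBetti_ne_zero_of_cocycle (Ψ : (Finset (Fin (edgeFins G).card) →₀ K) →ₗ[K] K)
    {S : Finset (Fin (edgeFins G).card)} {i : ℕ} (hcard : S.card = i + 1)
    (hclosed : ∀ U, coveredVertices G U = coveredVertices G S →
      Ψ (weightedBoundary 1 (single U 1)) = 0)
    (hssubset : ∀ T, coveredVertices G T ⊂ coveredVertices G S → Ψ (single T 1) = 0)
    (hmin : ∀ k ∈ S, coveredVertices G (S.erase k) ≠ coveredVertices G S)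
    (hS : Ψ (single S 1) ≠ 0) : gBetti K G i (coveredVertices G S).card ≠ 0 := by
  have heq (T) : mlcm (edgeGens G) T = mlcm (edgeGens G) S ↔
      coveredVertices G T = coveredVertices G S := by
    simp only [le_antisymm_iff, mlcm_edgeGens_le_iff]
  have hlt (T) : mlcm (edgeGens G) T < mlcm (edgeGens G) S ↔
      coveredVertices G T ⊂ coveredVertices G S := by
    simp only [lt_iff_le_not_ge, mlcm_edgeGens_le_iff]
  have hdegree : ∑ x, mlcm (edgeGens G) S x = (coveredVertices G S).card := by
    simp [mlcm_edgeGens]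
  rw [gBetti, betti, ← hcard, ← hdegree]
  exact torRank_ne_zero_of_cocycle Ψ (fun U hU => hclosed U ((heq U).1 hU))
    (fun T hT => hssubset T ((hlt T).1 hT)) (fun k hk => mt (heq _).1 (hmin k hk)) hS

theorem le_gPd {i j : ℕ} (h : gBetti K G i j ≠ 0) : i ≤ gPd K G := by
  refine le_csSup ⟨(edgeFins G).card, ?_⟩ ⟨j, h⟩
  rintro i ⟨j, hj⟩
  by_contra! hi
  exact hj (torRank_eq_zero_of_lt (by lia) j)

theorem gIndex_le {i j : ℕ} (hij : i + 2 < j) (h : gBetti K G i j ≠ 0) : gIndex K G ≤ i :=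
  sInf_le ⟨i, j, rfl, hij, h⟩

end EdgeIdeal

section PrivateVertices

variable {K : Type} [Field K] {n : ℕ} {G : SimpleGraph (Fin n)} {ι : Type*} {J : Finset ι}
  {p q : ι → Fin n} {S : Finset (Fin (edgeFins G).card)}

theorem coveredVertices_eq_of_image_eq (hS : S.image (edge G) = J.image fun j => s(p j, q j)) :
    coveredVertices G S = J.image p ∪ J.image q := by
  ext x
  have hcovered : x ∈ coveredVertices G S ↔ ∃ e ∈ S.image (edge G), x ∈ e := by
    simp only [mem_coveredVertices, Finset.exists_mem_image]
  rw [hcovered, hS, Finset.exists_mem_image]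
  simp only [Finset.mem_union, Finset.mem_image, Sym2.mem_iff, and_or_left, exists_or, eq_comm]

theorem card_eq_of_image_eq (hp : Set.InjOn p J) (hpq : ∀ i ∈ J, ∀ j ∈ J, p i ≠ q j)
    (hS : S.image (edge G) = J.image fun j => s(p j, q j)) : S.card = J.card := by
  rw [← Finset.card_image_of_injective S (edge_injective G), hS, Finset.card_image_of_injOn]
  intro i hi j hj h
  rcases Sym2.eq_iff.1 h with h | h
  · exact hp hi hj h.1
  · exact absurd h.1 (hpq i hi j hj)

theorem coveredVertices_erase_ne_of_image_eq (hp : Set.InjOn p J)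
    (hpq : ∀ i ∈ J, ∀ j ∈ J, p i ≠ q j)
    (hS : S.image (edge G) = J.image fun j => s(p j, q j)) {k : Fin (edgeFins G).card}
    (hk : k ∈ S) : coveredVertices G (S.erase k) ≠ coveredVertices G S := by
  have hedge : ∀ k ∈ S, ∃ j ∈ J, s(p j, q j) = edge G k := fun k hk =>
    Finset.mem_image.1 (hS ▸ Finset.mem_image_of_mem _ hk)
  obtain ⟨j, hj, hjk⟩ := hedge k hk
  intro h
  have hcover : p j ∈ coveredVertices G (S.erase k) :=
    h ▸ mem_coveredVertices.2 ⟨k, hk, hjk ▸ Sym2.mem_mk_left _ _⟩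
  obtain ⟨k', hk', hmem⟩ := mem_coveredVertices.1 hcover
  obtain ⟨hne, hk'⟩ := Finset.mem_erase.1 hk'
  obtain ⟨i, hi, hik⟩ := hedge k' hk'
  rw [← hik, Sym2.mem_iff] at hmem
  rcases hmem with hmem | hmem
  · exact hne (edge_injective G (by rw [← hik, ← hjk, hp hj hi hmem]))
  · exact hpq j hj i hi hmem

theorem gBetti_ne_zero_of_privateVertices (hp : Set.InjOn p J)
    (hpq : ∀ i ∈ J, ∀ j ∈ J, p i ≠ q j)
    (hS : S.image (edge G) = J.image fun j => s(p j, q j)) {i : ℕ} (hcard : J.card = i + 1)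
    (Ψ : (Finset (Fin (edgeFins G).card) →₀ K) →ₗ[K] K)
    (hclosed : ∀ U, coveredVertices G U = J.image p ∪ J.image q →
      Ψ (weightedBoundary 1 (single U 1)) = 0)
    (hssubset : ∀ T, coveredVertices G T ⊂ J.image p ∪ J.image q → Ψ (single T 1) = 0)
    (hΨ : Ψ (single S 1) ≠ 0) : gBetti K G i (J.image p ∪ J.image q).card ≠ 0 := by
  rw [← coveredVertices_eq_of_image_eq hS] at hclosed hssubset ⊢
  exact gBetti_ne_zero_of_cocycle Ψ ((card_eq_of_image_eq hp hpq hS).trans hcard) hclosed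
    hssubset (fun _ => coveredVertices_erase_ne_of_image_eq hp hpq hS) hΨ

end PrivateVertices

section Star

/-- The label under which an edge of a graph on `insert v s` enters the cochain that detects the
star of `v`: the larger endpoint, where `v` is demoted to the least element `u` of `s`. -/
def starLabel {α : Type*} [LinearOrder α] (v u : α) (e : Sym2 α) : α :=
  (e.map fun x => if x = v then u else x).sup

variable {α : Type*} [LinearOrder α] {u v : α} {e : Sym2 α}

theorem starLabel_mk {x : α} (hx : x ≠ v) (hu : u ≤ x) : starLabel v u s(x, v) = x := by
  simp [starLabel, hx, hu]

theorem starLabel_mem (he : ¬e.IsDiag) (hu : ∀ x ∈ e, x ≠ v → u ≤ x) :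
    starLabel v u e ∈ e ∧ starLabel v u e ≠ v := by
  induction e with | _ x y
  simp only [Sym2.mk_isDiag_iff, Sym2.mem_iff, forall_eq_or_imp, forall_eq] at he hu
  simp only [starLabel, Sym2.map_mk, Sym2.sup_mk, Sym2.mem_iff]
  grind

theorem lt_starLabel (he : ¬e.IsDiag) (hu : ∀ x ∈ e, u ≤ x) (hv : v ∉ e) :
    u < starLabel v u e := by
  induction e with | _ x y
  simp only [Sym2.mk_isDiag_iff, Sym2.mem_iff, forall_eq_or_imp, forall_eq, not_or] at he hu hv
  simp only [starLabel, Sym2.map_mk, Sym2.sup_mk]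
  grind

variable {K : Type} [Field K] {n : ℕ} {G : SimpleGraph (Fin n)}

theorem starLabel_edge_mem {u v : Fin n} {s : Finset (Fin n)} (hu : ∀ x ∈ s, u ≤ x)
    {T : Finset (Fin (edgeFins G).card)} (hT : coveredVertices G T ⊆ insert v s)
    {k : Fin (edgeFins G).card} (hk : k ∈ T) :
    starLabel v u (edge G k) ∈ edge G k ∧ starLabel v u (edge G k) ∈ s := by
  have hsub (x) (hx : x ∈ edge G k) : x = v ∨ x ∈ s :=
    Finset.mem_insert.1 (hT (mem_coveredVertices.2 ⟨k, hk, hx⟩))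
  obtain ⟨hmem, hne⟩ := starLabel_mem (u := u) (v := v)
    (G.not_isDiag_of_mem_edgeSet (edge_mem_edgeSet G k))
    fun x hx hxv => hu x ((hsub x hx).resolve_left hxv)
  exact ⟨hmem, (hsub _ hmem).resolve_left hne⟩

theorem labelForm_starLabel_single_eq_zero {u v : Fin n} {s : Finset (Fin n)} (hv : v ∉ s)
    (hus : u ∈ s) (hu : ∀ x ∈ s, u ≤ x) {T : Finset (Fin (edgeFins G).card)}
    (hT : coveredVertices G T ⊂ insert v s) :
    labelForm (starLabel v u ∘ edge G) s.toList (single T (1 : K)) = 0 := by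
  obtain ⟨c, hc, hcT⟩ := Finset.exists_of_ssubset hT
  rcases Finset.mem_insert.1 hc with rfl | hc
  · refine labelForm_single_eq_zero (b := u) (Finset.mem_toList.2 hus) fun k hk => ?_
    have hsub (x) (hx : x ∈ edge G k) : x ∈ s :=
      (Finset.subset_insert_iff_of_notMem hcT).1 hT.subset (mem_coveredVertices.2 ⟨k, hk, hx⟩)
    exact (lt_starLabel (G.not_isDiag_of_mem_edgeSet (edge_mem_edgeSet G k))
      (fun x hx => hu x (hsub x hx)) fun h => hv (hsub c h)).ne'
  · refine labelForm_single_eq_zero (b := c) (Finset.mem_toList.2 hc) fun k hk h => hcT ?_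
    exact mem_coveredVertices.2 ⟨k, hk, h ▸ (starLabel_edge_mem hu hT.subset hk).1⟩

theorem gBetti_ne_zero_of_star {v : Fin n} {s : Finset (Fin n)} (hs : ∀ x ∈ s, G.Adj v x) {i : ℕ}
    (hcard : s.card = i + 1) : gBetti K G i (i + 2) ≠ 0 := by
  have hsne : s.Nonempty := Finset.card_pos.1 (by lia)
  have hv : ∀ x ∈ s, x ≠ v := fun x hx => (hs x hx).ne'
  have hvs : v ∉ s := fun h => hv v h rfl
  obtain ⟨u, hus, hu⟩ : ∃ u ∈ s, ∀ x ∈ s, u ≤ x := ⟨_, s.min'_mem hsne, s.min'_le⟩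
  obtain ⟨S, hS⟩ := exists_image_edge_eq (G := G) (Q := s.image fun x => s(x, v)) <|
    Finset.forall_mem_image.2 fun x hx => (hs x hx).symm
  have hW : s.image id ∪ s.image (fun _ => v) = insert v s := by
    rw [Finset.image_id, Finset.image_const hsne, Finset.union_comm, Finset.insert_eq]
  have hWcard : (s.image id ∪ s.image (fun _ => v)).card = i + 2 := by
    rw [hW, Finset.card_insert_of_notMem hvs, hcard]
  rw [← hWcard]
  refine gBetti_ne_zero_of_privateVertices (p := id) (q := fun _ => v) Function.injective_id.injOn
    (fun x hx _ _ => hv x hx) hS hcard (labelForm (starLabel v u ∘ edge G) s.toList) ?_ ?_ ?_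
  · exact fun U hU => labelForm_boundary_single_eq_zero fun k hk =>
      Finset.mem_toList.2 (starLabel_edge_mem hu (hU.trans hW).subset hk).2
  · exact fun T hT => labelForm_starLabel_single_eq_zero hvs hus hu (hW ▸ hT)
  · refine (isUnit_labelForm_comp_single s.nodup_toList (edge_injective G).injOn
      (s.toList_toFinset.symm ▸ hS) fun x hx => ?_).ne_zero
    rw [Finset.mem_toList] at hx
    exact starLabel_mk (hv x hx) (hu x hx)

end Star

section Cycle

theorem mk_mem_cycleChords {t i j : ℕ} :
    s(i, j) ∈ cycleChords t ↔
      i ≤ t + 1 ∧ j ≤ t + 1 ∧ (i + 1 < j ∨ j + 1 < i) ∧ s(i, j) ≠ s(0, t + 1) := by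
  simp only [cycleChords, diagonals, Set.mem_sdiff, Set.mem_ofPred_eq, Set.mem_singleton_iff]
  constructor
  · rintro ⟨⟨a, b, hab, hb, h⟩, hne⟩
    rcases Sym2.eq_iff.1 h with ⟨rfl, rfl⟩ | ⟨rfl, rfl⟩
    · exact ⟨by lia, hb, .inl hab, hne⟩
    · exact ⟨hb, by lia, .inr hab, hne⟩
  · rintro ⟨hi, hj, h | h, hne⟩
    · exact ⟨⟨i, j, h, hj, rfl⟩, hne⟩
    · exact ⟨⟨j, i, h, hi, Sym2.eq_swap⟩, hne⟩

theorem coverEdge_mem_cycleChords {t j : ℕ} (ht : 2 ≤ t) (hj : 1 ≤ j) (hjt : j ≤ t) :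
    coverEdge t j ∈ cycleChords t := by
  rw [coverEdge, coverEnd, mk_mem_cycleChords, ne_eq, Sym2.eq_iff]
  grind

variable {K : Type} [Field K] {n t : ℕ} {G : SimpleGraph (Fin n)} {F : ℕ → Fin n} {R : Fin n → ℕ}

theorem exists_eq_of_mem_edge {T : Finset (Fin (edgeFins G).card)}
    (hT : coveredVertices G T ⊆ (Finset.range (t + 2)).image F) {k : Fin (edgeFins G).card}
    (hk : k ∈ T) {x : Fin n} (hx : x ∈ edge G k) : ∃ i ≤ t + 1, F i = x := by
  obtain ⟨i, hi, rfl⟩ := Finset.mem_image.1 (hT (mem_coveredVertices.2 ⟨k, hk, hx⟩))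
  exact ⟨i, Nat.lt_succ_iff.1 (Finset.mem_range.1 hi), rfl⟩

theorem map_edge_mem_cycleChords (hR : ∀ i ≤ t + 1, R (F i) = i)
    (hadj : ∀ i ≤ t + 1, ∀ j ≤ t + 1, G.Adj (F i) (F j) → s(i, j) ∈ cycleChords t)
    {T : Finset (Fin (edgeFins G).card)}
    (hT : coveredVertices G T ⊆ (Finset.range (t + 2)).image F) {k : Fin (edgeFins G).card}
    (hk : k ∈ T) : (edge G k).map R ∈ cycleChords t := by
  obtain ⟨⟨x, y⟩, hxy⟩ := (edge G k).exists_rep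
  replace hxy : s(x, y) = edge G k := hxy
  obtain ⟨i, hi, rfl⟩ := exists_eq_of_mem_edge hT hk (hxy ▸ Sym2.mem_mk_left x y)
  obtain ⟨j, hj, rfl⟩ := exists_eq_of_mem_edge hT hk (hxy ▸ Sym2.mem_mk_right (F i) y)
  rw [← hxy, Sym2.map_mk, hR i hi, hR j hj]
  exact hadj i hi j hj ((SimpleGraph.mem_edgeSet G).1 (hxy.symm ▸ edge_mem_edgeSet G k))

theorem notMem_map_edge (hR : ∀ i ≤ t + 1, R (F i) = i) {T : Finset (Fin (edgeFins G).card)}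
    (hT : coveredVertices G T ⊆ (Finset.range (t + 2)).image F) {c : ℕ}
    (hc : F c ∉ coveredVertices G T) {k : Fin (edgeFins G).card} (hk : k ∈ T) :
    c ∉ (edge G k).map R := by
  intro hmem
  obtain ⟨x, hx, rfl⟩ := Sym2.mem_map.1 hmem
  obtain ⟨i, hi, rfl⟩ := exists_eq_of_mem_edge hT hk hx
  exact hc (mem_coveredVertices.2 ⟨k, hk, (hR i hi).symm ▸ hx⟩)

theorem image_cover_union_image_coverEnd (ht : 2 ≤ t) :
    (Finset.Icc 1 t).image F ∪ (Finset.Icc 1 t).image (F ∘ coverEnd t) =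
      (Finset.range (t + 2)).image F := by
  rw [← Finset.image_image, ← Finset.image_union]
  congr 1
  ext x
  simp only [coverEnd, Finset.mem_union, Finset.mem_image, Finset.mem_Icc, Finset.mem_range]
  constructor
  · grind
  · intro hx
    rcases eq_or_ne x 0 with rfl | h0
    · exact .inr ⟨t, by lia, if_pos rfl⟩
    rcases eq_or_ne x (t + 1) with rfl | h1
    · exact .inr ⟨1, by lia, if_neg (by lia)⟩
    · exact .inl (by lia)

theorem coverEnd_le (t j : ℕ) : coverEnd t j ≤ t + 1 := by
  unfold coverEnd
  split_ifs <;> lia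

theorem ne_coverEnd {i : ℕ} (hi : i ∈ Finset.Icc 1 t) (j : ℕ) : i ≠ coverEnd t j := by
  grind [coverEnd]

theorem isUnit_cycleForm_map_edge_single (ht : 2 ≤ t) (hR : ∀ i ≤ t + 1, R (F i) = i)
    {S : Finset (Fin (edgeFins G).card)}
    (hS : S.image (edge G) = (Finset.Icc 1 t).image fun j => s(F j, F (coverEnd t j))) :
    IsUnit (cycleForm (Sym2.map R ∘ edge G) t (single S (1 : K))) := by
  have hmap : ∀ j ∈ Finset.Icc 1 t, Sym2.map R s(F j, F (coverEnd t j)) = coverEdge t j := by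
    intro j hj
    rw [Sym2.map_mk, hR j (by grind), hR _ (coverEnd_le t j), coverEdge]
  refine isUnit_cycleForm_single ht ?_ ?_
  · have hleftInv : Set.LeftInvOn (Sym2.map F) (Sym2.map R) (edge G '' S) := by
      rintro _ ⟨k, hk, rfl⟩
      obtain ⟨j, hj, hjk⟩ := Finset.mem_image.1 (hS ▸ Finset.mem_image_of_mem (edge G) hk)
      rw [← hjk, hmap j hj, coverEdge, Sym2.map_mk]
    exact hleftInv.injOn.comp (edge_injective G).injOn (Set.mapsTo_image _ _)
  · rw [← Finset.image_image, hS, Finset.image_image]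
    exact Finset.image_congr hmap

theorem gBetti_ne_zero_of_anticycle (ht : 2 ≤ t) (hF : Set.InjOn F (Set.Iic (t + 1)))
    (hadj : ∀ i ≤ t + 1, ∀ j ≤ t + 1, G.Adj (F i) (F j) ↔ s(i, j) ∈ cycleChords t) :
    gBetti K G (t - 1) (t + 2) ≠ 0 := by
  obtain ⟨R, hR⟩ : ∃ R : Fin n → ℕ, ∀ i ≤ t + 1, R (F i) = i :=
    ⟨_, fun i hi => hF.leftInvOn_invFunOn hi⟩
  have hW := image_cover_union_image_coverEnd (F := F) ht
  have hWcard : ((Finset.Icc 1 t).image F ∪ (Finset.Icc 1 t).image (F ∘ coverEnd t)).card =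
      t + 2 := by
    rw [hW, Finset.card_image_of_injOn, Finset.card_range]
    exact hF.mono fun i hi => Nat.lt_succ_iff.1 (Finset.mem_range.1 hi)
  obtain ⟨S, hS⟩ := exists_image_edge_eq (G := G)
    (Q := (Finset.Icc 1 t).image fun j => s(F j, F (coverEnd t j))) <|
      Finset.forall_mem_image.2 fun j hj => (hadj j (by grind) _ (coverEnd_le t j)).2 <|
        coverEdge_mem_cycleChords ht (Finset.mem_Icc.1 hj).1 (Finset.mem_Icc.1 hj).2
  have hchord {T} (hT : coveredVertices G T ⊆ (Finset.range (t + 2)).image F) (k) (hk : k ∈ T) :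
      (edge G k).map R ∈ cycleChords t :=
    map_edge_mem_cycleChords hR (fun i hi j hj => (hadj i hi j hj).1) hT hk
  rw [← hWcard]
  refine gBetti_ne_zero_of_privateVertices (J := Finset.Icc 1 t) (p := F) (q := F ∘ coverEnd t)
    (hF.mono fun j hj => ?_) (fun i hi j _ => ?_) hS (by rw [Nat.card_Icc]; lia)
    (cycleForm (Sym2.map R ∘ edge G) t) ?_ ?_ (isUnit_cycleForm_map_edge_single ht hR hS).ne_zero
  · exact (Finset.mem_Icc.1 hj).2.trans (Nat.le_succ t)
  · exact hF.ne (by grind) (coverEnd_le t j) (ne_coverEnd hi j)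
  · exact fun U hU => cycleForm_boundary_single_eq_zero (hchord (hU.trans hW).subset)
  · intro T hT
    rw [hW] at hT
    obtain ⟨x, hx, hxT⟩ := Finset.exists_of_ssubset hT
    obtain ⟨c, hc, rfl⟩ := Finset.mem_image.1 hx
    exact cycleForm_single_eq_zero (Nat.lt_succ_iff.1 (Finset.mem_range.1 hc)) fun k hk =>
      ⟨(hchord hT.subset k hk).1, notMem_map_edge hR hT.subset hxT hk⟩

end Cycle

section InducedCycle

variable {K : Type} [Field K] {n l : ℕ} {G : SimpleGraph (Fin n)} {f : ZMod l → Fin n}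

theorem natCast_eq_natCast_iff_of_le {t i j : ℕ} (hi : i ≤ t + 1) (hj : j ≤ t + 1) :
    (i : ZMod (t + 2)) = j ↔ i = j := by
  rw [ZMod.natCast_eq_natCast_iff', Nat.mod_eq_of_lt (by lia), Nat.mod_eq_of_lt (by lia)]

theorem natCast_eq_natCast_add_one_iff {t i j : ℕ} (hi : i ≤ t + 1) (hj : j ≤ t + 1) :
    (j : ZMod (t + 2)) = i + 1 ↔ j = i + 1 ∨ i = t + 1 ∧ j = 0 := by
  rcases hi.eq_or_lt with rfl | hi
  · have hlast : ((t + 1 : ℕ) : ZMod (t + 2)) + 1 = (0 : ℕ) := by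
      rw [← Nat.cast_succ, ZMod.natCast_self, Nat.cast_zero]
    rw [hlast, natCast_eq_natCast_iff_of_le hj (Nat.zero_le _)]
    lia
  · rw [← Nat.cast_succ, natCast_eq_natCast_iff_of_le hj hi]
    lia

theorem adj_iff_mem_cycleChords {t : ℕ} {f : ZMod (t + 2) → Fin n} (hf : Function.Injective f)
    (hcyc : ∀ i j, Gᶜ.Adj (f i) (f j) ↔ j = i + 1 ∨ i = j + 1) {i j : ℕ} (hi : i ≤ t + 1)
    (hj : j ≤ t + 1) : G.Adj (f i) (f j) ↔ s(i, j) ∈ cycleChords t := by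
  have hne : f i = f j ↔ i = j := by rw [hf.eq_iff, natCast_eq_natCast_iff_of_le hi hj]
  have hcompl := hcyc i j
  rw [SimpleGraph.compl_adj, ne_eq, hne, natCast_eq_natCast_add_one_iff hi hj,
    natCast_eq_natCast_add_one_iff hj hi] at hcompl
  have hirrefl : G.Adj (f i) (f j) → i ≠ j := fun h => mt hne.2 h.ne
  rw [mk_mem_cycleChords, ne_eq, Sym2.eq_iff]
  grind

theorem gBetti_ne_zero_of_inducedCycle_compl (hl : 3 < l) (hf : Function.Injective f)
    (hcyc : ∀ i j, Gᶜ.Adj (f i) (f j) ↔ j = i + 1 ∨ i = j + 1) : gBetti K G (l - 3) l ≠ 0 := by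
  obtain ⟨t, rfl⟩ := Nat.exists_eq_add_of_le' (show 2 ≤ l by lia)
  have hbetti : gBetti K G (t - 1) (t + 2) ≠ 0 :=
    gBetti_ne_zero_of_anticycle (by lia)
      (fun _ hi _ hj h => (natCast_eq_natCast_iff_of_le hi hj).1 (hf h))
      fun _ hi _ hj => adj_iff_mem_cycleChords hf hcyc hi hj
  exact hbetti

theorem gIndex_add_two_le_gPd_of_inducedCycle_compl (hl : 3 < l) (hf : Function.Injective f)
    (hcyc : ∀ i j, Gᶜ.Adj (f i) (f j) ↔ j = i + 1 ∨ i = j + 1) {v : Fin n}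
    (hv : ∀ i, G.Adj v (f i)) : gIndex K G + 2 ≤ gPd K G := by
  have : NeZero l := ⟨by lia⟩
  have hindex : gIndex K G ≤ (l - 3 : ℕ) :=
    gIndex_le (by lia) (gBetti_ne_zero_of_inducedCycle_compl hl hf hcyc)
  have hstar : ∀ x ∈ Finset.univ.image f, G.Adj v x := Finset.forall_mem_image.2 fun i _ => hv i
  have hcard : (Finset.univ.image f).card = (l - 1) + 1 := by
    rw [Finset.card_image_of_injective _ hf, Finset.card_univ, ZMod.card]
    lia
  calc gIndex K G + 2 ≤ (l - 3 : ℕ) + 2 := by gcongr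
    _ = (l - 1 : ℕ) := by norm_cast; lia
    _ ≤ gPd K G := Nat.cast_le.2 (le_gPd (gBetti_ne_zero_of_star hstar hcard))

end InducedCycle

end EP

theorem statement7_general (K : Type) [Field K] (n : ℕ) (G : SimpleGraph (Fin n))
    (h : (EP.gPd K G : ℕ∞) ≤ EP.gIndex K G + 1) (l : ℕ) (hl : 3 < l) (f : ZMod l → Fin n)
    (hinj : Function.Injective f)
    (hcyc : ∀ i j : ZMod l, (Gᶜ).Adj (f i) (f j) ↔ (j = i + 1 ∨ i = j + 1))
    (v : Fin n) (hv : v ∉ Set.range f) :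
    ∃ i : ZMod l, (Gᶜ).Adj v (f i) := by
  by_contra! hnonadj
  have hadj (i : ZMod l) : G.Adj v (f i) :=
    of_not_not fun hG => hnonadj i <| (G.compl_adj v (f i)).2 ⟨fun hvi => hv ⟨i, hvi.symm⟩, hG⟩
  have hindex := (EP.gIndex_add_two_le_gPd_of_inducedCycle_compl hl hinj hcyc hadj).trans h
  have hfinite : EP.gIndex K G ≠ ⊤ :=
    ne_top_of_le_ne_top (ENat.natCast_ne_top _)
      (EP.gIndex_le (by lia) (EP.gBetti_ne_zero_of_inducedCycle_compl hl hinj hcyc))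
  exact absurd ((ENat.add_le_add_iff_left hfinite).1 hindex) (by decide)

/-- If `I(G)` has almost maximal finite index and `C` is an induced cycle
of length `> 3` in the complement graph `Ḡ`, then every vertex outside `C` is adjacent in
`Ḡ` to some vertex of `C`. -/
theorem statement7 (K : Type) [Field K] (n : ℕ) (G : SimpleGraph (Fin n))
    (h : EP.AMFI K G) (l : ℕ) (hl : 3 < l) (f : ZMod l → Fin n)
    (hinj : Function.Injective f)
    (hcyc : ∀ i j : ZMod l, (Gᶜ).Adj (f i) (f j) ↔ (j = i + 1 ∨ i = j + 1))
    (v : Fin n) (hv : v ∉ Set.range f) :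
    ∃ i : ZMod l, (Gᶜ).Adj v (f i) :=
  statement7_general K n G h.ge l hl f hinj hcyc v hv
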